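/- arXiv:2502.06199 — 2 statements merged into one kernel-verified Lean document; each statement's English description precedes it below -/
import Mathlib

section
/- Let gamma > 1 and c_v > 0, and let rhobar_pm, qbar_pm, pbar_pm be positive reals with cbar_pm^2 = gamma pbar_pm / rhobar_pm, Mbar_pm = qbar_pm / cbar_pm, satisfying the background Rankine-Hugoniot relations rhobar_+ qbar_+ = rhobar_- qbar_-, pbar_+ + rhobar_+ qbar_+^2 = pbar_- + rhobar_- qbar_-^2, and qbar_+^2/2 + cbar_+^2/(gamma-1) = qbar_-^2/2 + cbar_-^2/(gamma-1). Define kappa, kappa1, kappa2 as in the context. Suppose real numbers dp, dq, ds, dp_-, dq_-, ds_-, g1, g2, g3 satisfy the three linearized Rankine-Hugoniot relations: (E1) (1/(rhobar_+^2 qbar_+ cbar_+^2)) dp + (1/(rhobar_+ qbar_+^2)) dq - (1/(gamma c_v rhobar_+ qbar_+)) ds - [ (1/(rhobar_-^2 qbar_- cbar_-^2)) dp_- + (1/(rhobar_- qbar_-^2)) dq_- - (1/(gamma c_v rhobar_- qbar_-)) ds_- ] = g1; (E2) (1/(rhobar_+ qbar_+)) dp + dq - pbar_+ ( (1/(rhobar_+^2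 qbar_+ cbar_+^2)) dp + (1/(rhobar_+ qbar_+^2)) dq - (1/(gamma c_v rhobar_+ qbar_+)) ds ) - [ (1/(rhobar_- qbar_-)) dp_- + dq_- - pbar_- ( (1/(rhobar_-^2 qbar_- cbar_-^2)) dp_- + (1/(rhobar_- qbar_-^2)) dq_- - (1/(gamma c_v rhobar_- qbar_-)) ds_- ) ] = g2; (E3) (1/rhobar_+) dp + qbar_+ dq + (pbar_+/((gamma-1) c_v rhobar_+)) ds - [ (1/rhobar_-) dp_- + qbar_- dq_- + (pbar_- /((gamma-1) c_v rhobar_-)) ds_- ] = g3. Then ((Mbar_+^2 - 1)/(rhobar_+ qbar_+^2)) dp = ((Mbar_-^2 - 1)/(rhobar_- qbar_-^2)) (1 - kappa) dp_- + kappa1 (dp_- + rhobar_- qbar_- dq_-) + kappa2 ds_- + e1 g1 + e2 g2 + e3 g3, for constants e1, e2, e3 depending only on gamma, c_v and the background states (pbar_pm, rhobar_pm, qbar_pm). -/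
noncomputable section

open Real

/-! Let a state `U` have the same mass flux `j` and momentum flux as the downstream state `V`. The
combination of mass, momentum and energy that eliminates the speed and entropy perturbations at `V`
sends the linearized quantities at `U` to a combination of `δp`, `δp + j δq` and `δs` with
coefficients `(M² - 1) / (ρ q²) (1 - κ)`, `κ₁` and `κ₂`. Since `κ`, `κ₁` and `κ₂` vanish for
`U = V`, the upstream and the downstream side of the jump are two instances of the same identity. -/

/-- A polytropic ideal gas with adiabatic exponent `γ` and specific heat `cv` at constant volume,
constrained only by the nonvanishing of the denominators `γ`, `γ - 1` and `cv`. -/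
structure PolytropicGas (K : Type*) [Field K] where
  γ : K
  cv : K
  γ_ne_zero : γ ≠ 0
  γ_ne_one : γ ≠ 1
  cv_ne_zero : cv ≠ 0

/-- A background state of a one-dimensional flow: density `ρ`, speed `q` and pressure `p`,
constrained only by being nonzero, since all three are divided by. -/
structure FlowState (K : Type*) [Field K] where
  ρ : K
  q : K
  p : K
  ρ_ne_zero : ρ ≠ 0
  q_ne_zero : q ≠ 0
  p_ne_zero : p ≠ 0

/-- A perturbation of a flow state, in the independent variables pressure, speed and entropy. -/
structure FlowPerturbation (K : Type*) where
  p : K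
  q : K
  s : K

namespace FlowState

variable {K : Type*} [Field K] (G : PolytropicGas K) (U V : FlowState K) (δ : FlowPerturbation K)

/-- The square `c²` of the speed of sound. -/
def soundSpeedSq : K := G.γ * U.p / U.ρ

/-- The square `M²` of the Mach number. -/
def machSq : K := U.q ^ 2 / U.soundSpeedSq G

/-- The linearization of `-1 / (ρ q)`, expressing conservation of mass across a shock; the density
perturbation is `δρ = δp / c² - ρ δs / (γ cv)`. -/
def massVariation : K :=
  1 / (U.ρ ^ 2 * U.q * U.soundSpeedSq G) * δ.p + 1 / (U.ρ * U.q ^ 2) * δ.q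
    - 1 / (G.γ * G.cv * U.ρ * U.q) * δ.s

/-- The linearization of `q + p / (ρ q)`, expressing conservation of momentum across a shock. -/
def momentumVariation : K :=
  1 / (U.ρ * U.q) * δ.p + δ.q - U.p * U.massVariation G δ

/-- The linearization of `q² / 2 + c² / (γ - 1)`, expressing conservation of energy across a
shock. -/
def energyVariation : K :=
  1 / U.ρ * δ.p + U.q * δ.q + U.p / ((G.γ - 1) * G.cv * U.ρ) * δ.s

/-- The perturbation of the momentum flux `p + ρ q²` when the mass flux `ρ q` is held fixed. -/
def impulseVariation : K := δ.p + U.ρ * U.q * δ.q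

/-- The constant `κ` of a shock with upstream state `U` and downstream state `V`. -/
def kappa : K := ((G.γ - 1) / (G.γ * V.p) + 1 / (V.ρ * V.q ^ 2)) * (V.p - U.p)

/-- The constant `κ₁` of a shock with upstream state `U` and downstream state `V`. -/
def kappa₁ : K :=
  -(1 / (U.ρ * U.q ^ 2)) * (U.kappa G V + (V.p - U.p) / (V.ρ * V.q ^ 2))
    - (G.γ - 1) / (G.γ * V.p) * (1 - V.ρ / U.ρ)

/-- The constant `κ₂` of a shock with upstream state `U` and downstream state `V`. -/
def kappa₂ : K :=
  1 / (G.γ * G.cv)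
    * (U.kappa G V + (U.soundSpeedSq G - V.soundSpeedSq G) / V.soundSpeedSq G)

/-- The weight of the energy relation in the elimination of the speed and entropy perturbations at
`V`. -/
def energyWeight : K := (G.γ - 1) * V.ρ / (G.γ * V.p)

/-- The weight of the momentum relation in the elimination of the speed and entropy perturbations at
`V`. -/
def momentumWeight : K :=
  -(V.ρ * V.q * ((G.γ - 1) / (G.γ * V.p) + 1 / (V.ρ * V.q ^ 2)))

/-- The weight of the mass relation in the elimination of the speed and entropy perturbations at
`V`. -/
def massWeight : K := V.ρ * V.q + V.p * V.momentumWeight G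

lemma kappa_self : V.kappa G V = 0 := by
  simp [kappa]

lemma kappa₁_self : V.kappa₁ G V = 0 := by
  simp [kappa₁, kappa_self, V.ρ_ne_zero]

lemma kappa₂_self : V.kappa₂ G V = 0 := by
  simp [kappa₂, kappa_self]

lemma massFlux_mul_massVariation :
    U.ρ * U.q * U.massVariation G δ =
      (U.machSq G - 1) / (U.ρ * U.q ^ 2) * δ.p
        + 1 / (U.ρ * U.q ^ 2) * U.impulseVariation δ - 1 / (G.γ * G.cv) * δ.s := by
  have hρ := U.ρ_ne_zero
  have hq := U.q_ne_zero
  simp only [massVariation, machSq, impulseVariation]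
  field_simp
  ring

lemma massFlux_mul_momentumVariation_add :
    U.ρ * U.q * (U.momentumVariation G δ + U.p * U.massVariation G δ) =
      U.impulseVariation δ := by
  have hρ := U.ρ_ne_zero
  have hq := U.q_ne_zero
  simp only [momentumVariation, impulseVariation]
  field_simp
  ring

lemma energyVariation_eq :
    U.energyVariation G δ =
      1 / U.ρ * (U.impulseVariation δ + U.p / ((G.γ - 1) * G.cv) * δ.s) := by
  have hρ := U.ρ_ne_zero
  simp only [energyVariation, impulseVariation]
  field_simp

lemma massWeight_sub_mul_momentumWeight :
    V.massWeight G - U.p * V.momentumWeight G = V.ρ * V.q * (1 - U.kappa G V) := by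
  simp only [massWeight, momentumWeight, kappa]
  ring

lemma pressure_jump_div (hmom : V.p + V.ρ * V.q ^ 2 = U.p + U.ρ * U.q ^ 2) :
    1 / (U.ρ * U.q ^ 2) * ((V.p - U.p) / (V.ρ * V.q ^ 2)) =
      1 / (V.ρ * V.q ^ 2) - 1 / (U.ρ * U.q ^ 2) := by
  have hρU := U.ρ_ne_zero
  have hqU := U.q_ne_zero
  have hρV := V.ρ_ne_zero
  have hqV := V.q_ne_zero
  field_simp
  linear_combination hmom

lemma kappa₁_eq (hmom : V.p + V.ρ * V.q ^ 2 = U.p + U.ρ * U.q ^ 2) :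
    U.kappa₁ G V =
      (1 - U.kappa G V) * (1 / (U.ρ * U.q ^ 2))
        - ((G.γ - 1) / (G.γ * V.p) + 1 / (V.ρ * V.q ^ 2)) + V.energyWeight G / U.ρ := by
  simp only [kappa₁, energyWeight]
  linear_combination -pressure_jump_div U V hmom

lemma soundSpeedSq_div : U.soundSpeedSq G / V.soundSpeedSq G = U.p * V.ρ / (V.p * U.ρ) := by
  have hγ := G.γ_ne_zero
  simp only [soundSpeedSq]
  field_simp

lemma kappa₂_eq :
    U.kappa₂ G V =
      -((1 - U.kappa G V) * (1 / (G.γ * G.cv)))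
        + V.energyWeight G / U.ρ * (U.p / ((G.γ - 1) * G.cv)) := by
  have hγ := sub_ne_zero.mpr G.γ_ne_one
  have hc : V.soundSpeedSq G ≠ 0 :=
    div_ne_zero (mul_ne_zero G.γ_ne_zero V.p_ne_zero) V.ρ_ne_zero
  rw [kappa₂, energyWeight, sub_div, div_self hc, soundSpeedSq_div]
  field_simp
  ring

theorem weighted_variation_eq (hmass : V.ρ * V.q = U.ρ * U.q)
    (hmom : V.p + V.ρ * V.q ^ 2 = U.p + U.ρ * U.q ^ 2) :
    V.massWeight G * U.massVariation G δ + V.momentumWeight G * U.momentumVariation G δ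
        + V.energyWeight G * U.energyVariation G δ =
      (U.machSq G - 1) / (U.ρ * U.q ^ 2) * (1 - U.kappa G V) * δ.p
        + U.kappa₁ G V * U.impulseVariation δ + U.kappa₂ G V * δ.s := by
  have momentum_part :
      V.momentumWeight G * (U.momentumVariation G δ + U.p * U.massVariation G δ) =
        -((G.γ - 1) / (G.γ * V.p) + 1 / (V.ρ * V.q ^ 2)) * U.impulseVariation δ := by
    rw [momentumWeight, ← massFlux_mul_momentumVariation_add G U, hmass]
    ring
  calc
    _ = (V.massWeight G - U.p * V.momentumWeight G) * U.massVariation G δ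
          + V.momentumWeight G * (U.momentumVariation G δ + U.p * U.massVariation G δ)
          + V.energyWeight G * U.energyVariation G δ := by ring
    _ = (1 - U.kappa G V) * (U.ρ * U.q * U.massVariation G δ)
          - ((G.γ - 1) / (G.γ * V.p) + 1 / (V.ρ * V.q ^ 2)) * U.impulseVariation δ
          + V.energyWeight G * U.energyVariation G δ := by
      rw [massWeight_sub_mul_momentumWeight, momentum_part, hmass]
      ring
    _ = _ := by
      rw [massFlux_mul_massVariation, energyVariation_eq, kappa₁_eq G U V hmom, kappa₂_eq]
      ring

theorem weighted_variation_self :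
    V.massWeight G * V.massVariation G δ + V.momentumWeight G * V.momentumVariation G δ
        + V.energyWeight G * V.energyVariation G δ =
      (V.machSq G - 1) / (V.ρ * V.q ^ 2) * δ.p := by
  simpa [kappa_self, kappa₁_self, kappa₂_self] using weighted_variation_eq G V V δ rfl rfl

end FlowState

theorem linearized_RH_reduction_general {K : Type*} [Field K] (G : PolytropicGas K)
    (U V : FlowState K) (hmass : V.ρ * V.q = U.ρ * U.q)
    (hmom : V.p + V.ρ * V.q ^ 2 = U.p + U.ρ * U.q ^ 2) (δU δV : FlowPerturbation K) :
    (V.machSq G - 1) / (V.ρ * V.q ^ 2) * δV.p =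
      (U.machSq G - 1) / (U.ρ * U.q ^ 2) * (1 - U.kappa G V) * δU.p
        + U.kappa₁ G V * (δU.p + U.ρ * U.q * δU.q) + U.kappa₂ G V * δU.s
        + V.massWeight G * (V.massVariation G δV - U.massVariation G δU)
        + V.momentumWeight G * (V.momentumVariation G δV - U.momentumVariation G δU)
        + V.energyWeight G * (V.energyVariation G δV - U.energyVariation G δU) := by
  have upstream := U.weighted_variation_eq G V δU hmass hmom
  have downstream := V.weighted_variation_self G δV
  rw [FlowState.impulseVariation] at upstream
  linear_combination upstream - downstream

/-- the algebraic reduction (Lemma 3.2 / (3.58)) of the linearized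
Rankine–Hugoniot relations: the downstream pressure perturbation is expressed through
the upstream perturbations via the constants `κ, κ₁, κ₂`, up to a fixed linear
combination of the quadratic remainders `g1, g2, g3`, whose coefficients `e1, e2, e3`
depend only on `γ`, `c_v` and the background states. -/
theorem linearized_RH_reduction
    (γ cv : ℝ) (hγ : 1 < γ) (hcv : 0 < cv)
    (ρm ρp qm qp pm pp : ℝ)
    (hρm : 0 < ρm) (hρp : 0 < ρp) (hqm : 0 < qm) (hqp : 0 < qp)
    (hpm : 0 < pm) (hpp : 0 < pp)
    -- sonic speeds and Mach numbers of the background states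
    (cm2 cp2 : ℝ) (hcm2 : cm2 = γ * pm / ρm) (hcp2 : cp2 = γ * pp / ρp)
    (M2m M2p : ℝ) (hM2m : M2m = qm ^ 2 / cm2) (hM2p : M2p = qp ^ 2 / cp2)
    -- background Rankine–Hugoniot conditions, transonic background shock
    (hmass : ρp * qp = ρm * qm)
    (hmom : pp + ρp * qp ^ 2 = pm + ρm * qm ^ 2)
    (hbern : qp ^ 2 / 2 + cp2 / (γ - 1) = qm ^ 2 / 2 + cm2 / (γ - 1))
    (hsup : 1 < M2m) (hsub : M2p < 1)
    -- the constants κ, κ₁, κ₂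
    (κ κ1 κ2 : ℝ)
    (hκ : κ = ((γ - 1) / (γ * pp) + 1 / (ρp * qp ^ 2)) * (pp - pm))
    (hκ1 : κ1 = -(1 / (ρm * qm ^ 2)) * (κ + (pp - pm) / (ρp * qp ^ 2))
        - (γ - 1) / (γ * pp) * (1 - ρp / ρm))
    (hκ2 : κ2 = 1 / (γ * cv) * (κ + (cm2 - cp2) / cp2)) :
    ∃ e1 e2 e3 : ℝ, ∀ dp dq ds dpm dqm dsm g1 g2 g3 : ℝ,
      -- (E1)
      (1 / (ρp ^ 2 * qp * cp2) * dp + 1 / (ρp * qp ^ 2) * dq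
          - 1 / (γ * cv * ρp * qp) * ds
        - (1 / (ρm ^ 2 * qm * cm2) * dpm + 1 / (ρm * qm ^ 2) * dqm
          - 1 / (γ * cv * ρm * qm) * dsm) = g1) →
      -- (E2)
      (1 / (ρp * qp) * dp + dq
          - pp * (1 / (ρp ^ 2 * qp * cp2) * dp + 1 / (ρp * qp ^ 2) * dq
              - 1 / (γ * cv * ρp * qp) * ds)
        - (1 / (ρm * qm) * dpm + dqm
          - pm * (1 / (ρm ^ 2 * qm * cm2) * dpm + 1 / (ρm * qm ^ 2) * dqm
              - 1 / (γ * cv * ρm * qm) * dsm)) = g2) →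
      -- (E3)
      (1 / ρp * dp + qp * dq + pp / ((γ - 1) * cv * ρp) * ds
        - (1 / ρm * dpm + qm * dqm + pm / ((γ - 1) * cv * ρm) * dsm) = g3) →
      (M2p - 1) / (ρp * qp ^ 2) * dp
        = (M2m - 1) / (ρm * qm ^ 2) * (1 - κ) * dpm
          + κ1 * (dpm + ρm * qm * dqm) + κ2 * dsm
          + e1 * g1 + e2 * g2 + e3 * g3 := by
  subst hM2m hM2p hcm2 hcp2 hκ hκ1 hκ2
  let G : PolytropicGas ℝ := ⟨γ, cv, by linarith, hγ.ne', hcv.ne'⟩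
  let U : FlowState ℝ := ⟨ρm, qm, pm, hρm.ne', hqm.ne', hpm.ne'⟩
  let V : FlowState ℝ := ⟨ρp, qp, pp, hρp.ne', hqp.ne', hpp.ne'⟩
  refine ⟨V.massWeight G, V.momentumWeight G, V.energyWeight G, ?_⟩
  rintro dp dq ds dpm dqm dsm _ _ _ rfl rfl rfl
  exact linearized_RH_reduction_general G U V hmass hmom ⟨dpm, dqm, dsm⟩ ⟨dp, dq, ds⟩
end
end

section
/- Let lambda > 0, a2max >= 0 and theta1 < theta2 be real numbers. Set H = 1 + 4 a2max/lambda, G = exp(-H theta2 - 1), F(t) = 1 - G e^{H t}, and beta0 = G H e^{H theta1 - 1}. Then: (1) for every t in [theta1, theta2], 1 - e^{-1} <= F(t) < 1, F'(t) < 0 and F''(t) < 0; (2) for every beta in (0, min(1, beta0)], every t in [theta1, theta2], and all reals a1 >= 0, a2 with |a2| <= a2max, and a3 >= lambda, one has a1 * beta * (beta - 1) * F(t) + 2 a2 (beta - 1) F'(t) + a3 (F''(t) + beta F(t)) <= -2 a2max * G H e^{H t} + lambda (beta - G H e^{H t}) < 0. -/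
noncomputable section

open Real Set

/-!
Write `P = G H e^{Ht} > 0`, so that `F' = -P` and `F'' = -H P`. For `0 < β ≤ 1` the `a1`-term is
nonpositive and the `a2`-term is at most `2 a2max P`. Since `β ≤ β0 < P ≤ H P`, the factor
`F'' + β F` is nonpositive, so `a3` may be lowered to `lam`. The choice `H = 1 + 4 a2max / lam` gives
`lam F'' = -lam P - 4 a2max P`: half of the last term absorbs the mixed term, and the other half
remains as the margin `-2 a2max P`.
-/

/-- The angular part `F(t) = 1 - G e^{H t}` of the barrier, with free amplitude and exponent. -/
def angularBarrier (G H t : ℝ) : ℝ :=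
  1 - G * exp (H * t)

/-- The angular expression `r^{2-β} L(r^β F)` at angle `t`, for the second-order operator `L` with
radial, mixed and angular coefficients `a1`, `a2`, `a3` in polar coordinates. -/
def angularOperator (a1 a2 a3 β : ℝ) (F : ℝ → ℝ) (t : ℝ) : ℝ :=
  a1 * β * (β - 1) * F t + 2 * a2 * (β - 1) * deriv F t + a3 * (deriv (deriv F) t + β * F t)

section Operator

variable {lam a2max a1 a2 a3 β t : ℝ} {F : ℝ → ℝ}

lemma mixed_term_le (ha2max : 0 ≤ a2max) (ha2 : a2 ≤ a2max) (hβ : β ∈ Icc 0 1)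
    (hF' : deriv F t ≤ 0) :
    2 * a2 * (β - 1) * deriv F t ≤ -(2 * a2max * deriv F t) := by
  have hcoeff : a2 * (1 - β) ≤ a2max := calc
    a2 * (1 - β) ≤ a2max * (1 - β) := mul_le_mul_of_nonneg_right ha2 (sub_nonneg.2 hβ.2)
    _ ≤ a2max := mul_le_of_le_one_right ha2max (sub_le_self 1 hβ.1)
  calc
    2 * a2 * (β - 1) * deriv F t = 2 * (a2 * (1 - β) * -deriv F t) := by ring
    _ ≤ 2 * (a2max * -deriv F t) := by
      gcongr
      exact neg_nonneg.2 hF'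
    _ = -(2 * a2max * deriv F t) := by ring

lemma angularOperator_le (ha2max : 0 ≤ a2max) (ha1 : 0 ≤ a1) (ha2 : a2 ≤ a2max) (ha3 : lam ≤ a3)
    (hβ : β ∈ Icc 0 1) (hF : 0 ≤ F t) (hF' : deriv F t ≤ 0)
    (hF'' : deriv (deriv F) t + β * F t ≤ 0) :
    angularOperator a1 a2 a3 β F t ≤
      -(2 * a2max * deriv F t) + lam * (deriv (deriv F) t + β * F t) := by
  have radial : a1 * β * (β - 1) * F t ≤ 0 :=
    mul_nonpos_of_nonpos_of_nonneg
      (mul_nonpos_of_nonneg_of_nonpos (mul_nonneg ha1 hβ.1) (sub_nonpos.2 hβ.2)) hF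
  have mixed := mixed_term_le ha2max ha2 hβ hF'
  have angular := mul_le_mul_of_nonpos_right ha3 hF''
  unfold angularOperator
  linarith

end Operator

section Barrier

variable {G H t : ℝ}

lemma deriv_angularBarrier (G H : ℝ) :
    deriv (angularBarrier G H) = fun t => -(G * H * exp (H * t)) := by
  funext t
  have h := (((hasDerivAt_id t).const_mul H).exp.const_mul G).const_sub 1
  refine h.deriv.trans ?_
  simp only [id_eq]
  ring

lemma deriv_deriv_angularBarrier (G H t : ℝ) :
    deriv (deriv (angularBarrier G H)) t = H * deriv (angularBarrier G H) t := by
  have hshift : deriv (angularBarrier G H) = fun t => angularBarrier (G * H) H t - 1 := by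
    rw [deriv_angularBarrier]
    funext t
    unfold angularBarrier
    ring
  rw [hshift, deriv_sub_const_fun, deriv_angularBarrier]
  unfold angularBarrier
  ring

lemma angularBarrier_lt_one (hG : 0 < G) : angularBarrier G H t < 1 :=
  sub_lt_self 1 (mul_pos hG (exp_pos _))

lemma deriv_angularBarrier_neg (hG : 0 < G) (hH : 0 < H) : deriv (angularBarrier G H) t < 0 := by
  rw [deriv_angularBarrier]
  exact neg_neg_of_pos (by positivity)

lemma deriv_deriv_angularBarrier_neg (hG : 0 < G) (hH : 0 < H) :
    deriv (deriv (angularBarrier G H)) t < 0 := by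
  rw [deriv_deriv_angularBarrier]
  exact mul_neg_of_pos_of_neg hH (deriv_angularBarrier_neg hG hH)

lemma one_sub_exp_neg_one_le_angularBarrier {θ : ℝ} (hH : 0 ≤ H) (hG : G ≤ exp (-H * θ - 1))
    (ht : t ≤ θ) : 1 - exp (-1) ≤ angularBarrier G H t := by
  refine sub_le_sub_left ?_ 1
  calc
    G * exp (H * t) ≤ exp (-H * θ - 1) * exp (H * θ) := by gcongr
    _ = exp (-1) := by rw [← exp_add]; ring_nf

lemma deriv_deriv_angularBarrier_add_mul_nonpos {β : ℝ} (hG : 0 < G) (hH : 1 ≤ H) (hβ : 0 ≤ β)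
    (hβt : β ≤ G * H * exp (H * t)) :
    deriv (deriv (angularBarrier G H)) t + β * angularBarrier G H t ≤ 0 := by
  have hF : β * angularBarrier G H t ≤ G * H * exp (H * t) :=
    (mul_le_of_le_one_right hβ (angularBarrier_lt_one hG).le).trans hβt
  have hP : G * H * exp (H * t) ≤ H * (G * H * exp (H * t)) :=
    le_mul_of_one_le_left (hβ.trans hβt) hH
  rw [deriv_deriv_angularBarrier, deriv_angularBarrier]
  linarith

lemma angularOperator_angularBarrier_le {lam a2max a1 a2 a3 β : ℝ} (hlam : 0 < lam)
    (ha2max : 0 ≤ a2max) (hH : 1 + 4 * a2max / lam ≤ H) (hG : 0 < G)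
    (hF : 0 ≤ angularBarrier G H t) (hβ : β ∈ Icc 0 1) (hβt : β ≤ G * H * exp (H * t))
    (ha1 : 0 ≤ a1) (ha2 : a2 ≤ a2max) (ha3 : lam ≤ a3) :
    angularOperator a1 a2 a3 β (angularBarrier G H) t ≤
      -(2 * a2max * G * H * exp (H * t)) + lam * (β - G * H * exp (H * t)) := by
  have hH1 : 1 ≤ H := le_trans (le_add_of_nonneg_right (by positivity)) hH
  have hoperator := angularOperator_le ha2max ha1 ha2 ha3 hβ hF
    (deriv_angularBarrier_neg hG (by positivity)).le
    (deriv_deriv_angularBarrier_add_mul_nonpos hG hH1 hβ.1 hβt)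
  have hzeroth : lam * (β * angularBarrier G H t) ≤ lam * β :=
    mul_le_mul_of_nonneg_left
      (mul_le_of_le_one_right hβ.1 (angularBarrier_lt_one hG).le) hlam.le
  have hexponent : lam + 4 * a2max ≤ lam * H := calc
    lam + 4 * a2max = lam * (1 + 4 * a2max / lam) := by field_simp
    _ ≤ lam * H := mul_le_mul_of_nonneg_left hH hlam.le
  have habsorb := mul_le_mul_of_nonneg_right hexponent (hβ.1.trans hβt)
  rw [deriv_deriv_angularBarrier, deriv_angularBarrier] at hoperator
  linarith

end Barrier

lemma barrier_margin_neg {lam a2max G H t β : ℝ} (hlam : 0 < lam) (ha2max : 0 ≤ a2max)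
    (hβ : 0 ≤ β) (hβt : β < G * H * exp (H * t)) :
    -(2 * a2max * G * H * exp (H * t)) + lam * (β - G * H * exp (H * t)) < 0 := by
  have hmixed : 0 ≤ a2max * (G * H * exp (H * t)) := mul_nonneg ha2max (hβ.trans hβt.le)
  have hgap : lam * (β - G * H * exp (H * t)) < 0 :=
    mul_neg_of_pos_of_neg hlam (sub_neg.2 hβt)
  linarith

theorem barrier_angular_inequality_general {lam a2max θ1 θ2 H G β0 : ℝ} (hlam : 0 < lam)
    (ha2max : 0 ≤ a2max) (hH : 1 + 4 * a2max / lam ≤ H) (hG : 0 < G)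
    (hGθ : G ≤ exp (-H * θ2 - 1)) (hβ0 : β0 < G * H * exp (H * θ1)) :
    (∀ t ∈ Icc θ1 θ2,
      1 - exp (-1) ≤ angularBarrier G H t ∧ angularBarrier G H t < 1 ∧
        deriv (angularBarrier G H) t < 0 ∧ deriv (deriv (angularBarrier G H)) t < 0) ∧
    (∀ β ∈ Ioc (0 : ℝ) (min 1 β0), ∀ t ∈ Icc θ1 θ2,
      ∀ a1 a2 a3 : ℝ, 0 ≤ a1 → a2 ≤ a2max → lam ≤ a3 →
        angularOperator a1 a2 a3 β (angularBarrier G H) t ≤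
          -(2 * a2max * G * H * exp (H * t)) + lam * (β - G * H * exp (H * t)) ∧
        -(2 * a2max * G * H * exp (H * t)) + lam * (β - G * H * exp (H * t)) < 0) := by
  have hHpos : 0 < H := lt_of_lt_of_le (by positivity) hH
  have hlower {t : ℝ} (ht : t ∈ Icc θ1 θ2) :=
    one_sub_exp_neg_one_le_angularBarrier hHpos.le hGθ ht.2
  constructor
  · intro t ht
    exact ⟨hlower ht, angularBarrier_lt_one hG, deriv_angularBarrier_neg hG hHpos,
      deriv_deriv_angularBarrier_neg hG hHpos⟩
  · intro β hβ t ht a1 a2 a3 ha1 ha2 ha3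
    have hnonneg : 0 ≤ angularBarrier G H t :=
      (sub_nonneg.2 (exp_le_one_iff.2 (by norm_num))).trans (hlower ht)
    have hβt : β < G * H * exp (H * t) := calc
      β ≤ β0 := hβ.2.trans (min_le_right _ _)
      _ < G * H * exp (H * θ1) := hβ0
      _ ≤ G * H * exp (H * t) := by
        gcongr
        exact ht.1
    exact ⟨angularOperator_angularBarrier_le hlam ha2max hH hG hnonneg
        ⟨hβ.1.le, hβ.2.trans (min_le_left _ _)⟩ hβt.le ha1 ha2 ha3,
      barrier_margin_neg hlam ha2max hβ.1.le hβt⟩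

/-- the key barrier (comparison function) inequality for the angular part
`F(t) = 1 - G e^{H t}` of the barrier `‖f_s‖ r^β F(t) + σ` used near the corner points
where the shock front meets the nozzle walls. -/
theorem barrier_angular_inequality
    (lam a2max θ1 θ2 : ℝ) (hlam : 0 < lam) (ha2 : 0 ≤ a2max) (hθ : θ1 < θ2) :
    ∀ H G : ℝ, H = 1 + 4 * a2max / lam → G = Real.exp (-H * θ2 - 1) →
    ∀ F : ℝ → ℝ, F = (fun t => 1 - G * Real.exp (H * t)) →
    ∀ β0 : ℝ, β0 = G * H * Real.exp (H * θ1 - 1) →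
    -- (1)
    (∀ t ∈ Set.Icc θ1 θ2,
      1 - Real.exp (-1) ≤ F t ∧ F t < 1 ∧ deriv F t < 0 ∧ deriv (deriv F) t < 0) ∧
    -- (2)
    (∀ β ∈ Set.Ioc (0:ℝ) (min 1 β0), ∀ t ∈ Set.Icc θ1 θ2,
      ∀ a1 a2 a3 : ℝ, 0 ≤ a1 → |a2| ≤ a2max → lam ≤ a3 →
        a1 * β * (β - 1) * F t + 2 * a2 * (β - 1) * deriv F t
            + a3 * (deriv (deriv F) t + β * F t)
          ≤ -(2 * a2max * G * H * Real.exp (H * t))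
              + lam * (β - G * H * Real.exp (H * t)) ∧
        -(2 * a2max * G * H * Real.exp (H * t))
            + lam * (β - G * H * Real.exp (H * t)) < 0) := by
  rintro H G hH hG F rfl β0 rfl
  have hHpos : 0 < H := hH ▸ by positivity
  have hGpos : 0 < G := hG ▸ exp_pos _
  have hβ0 : G * H * exp (H * θ1 - 1) < G * H * exp (H * θ1) := by gcongr; exact sub_one_lt _
  obtain ⟨bounds, operator_le⟩ :=
    barrier_angular_inequality_general hlam ha2 hH.ge hGpos hG.le hβ0
  exact ⟨bounds, fun β hβ t ht a1 a2 a3 ha1 ha2' =>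
    operator_le β hβ t ht a1 a2 a3 ha1 (abs_le.1 ha2').2⟩
end
end
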